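/- arXiv:math/9902107 — 2 statements merged into one kernel-verified Lean document; each statement's English description precedes it below -/
import Mathlib

section
/- Let X be a set with at least five elements, let a and b be two distinct elements of X, and let H be the pointwise stabilizer of {a,b} in the symmetric group Sym(X), i.e., H = {π ∈ Sym(X) : π(a) = a and π(b) = b}. Then the subgroups F of Sym(X) with H ≤ F ≤ Sym(X) are exactly the following five: H itself; the setwise stabilizer of {a,b} (all π with π({a,b}) = {a,b}); the stabilizer of a (all π with π(a) = a); the stabilizer of b (all π with π(b) = b); and Sym(X) itself. -/
open Pointwise

universe u

lemma spp_exists {X : Type u} (hX : 5 ≤ Cardinal.mk X) (x y z w : X) :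
    ∃ t : X, t ≠ x ∧ t ≠ y ∧ t ≠ z ∧ t ≠ w := by
  obtain ⟨t, ht⟩ := Cardinal.exists_notMem_of_length_lt [x, y, z, w]
    (lt_of_lt_of_le (by norm_num) hX)
  simp at ht
  exact ⟨t, ht⟩

/-- `F` contains the pointwise stabilizer. -/
def SppLe {X : Type u} (a b : X) (F : Subgroup (Equiv.Perm X)) : Prop :=
  ∀ f : Equiv.Perm X, f a = a → f b = b → f ∈ F

lemma SppLe.symm {X : Type u} {a b : X} {F : Subgroup (Equiv.Perm X)} (h : SppLe a b F) :
    SppLe b a F := fun f hb ha => h f ha hb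

open Classical in
lemma spp_conj {X : Type u} {F : Subgroup (Equiv.Perm X)} {f : Equiv.Perm X} (hf : f ∈ F)
    {x y : X} (h : Equiv.swap (f x) (f y) ∈ F) : Equiv.swap x y ∈ F := by
  have : Equiv.swap x y = f⁻¹ * Equiv.swap (f x) (f y) * f := by
    rw [mul_assoc, ← Equiv.mul_swap_eq_swap_mul]; group
  rw [this]
  exact F.mul_mem (F.mul_mem (F.inv_mem hf) h) hf

open Classical in
lemma spp_swap_mem {X : Type u} {a b : X} {F : Subgroup (Equiv.Perm X)} (h : SppLe a b F)
    {c d : X} (hca : c ≠ a) (hcb : c ≠ b) (hda : d ≠ a) (hdb : d ≠ b) :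
    Equiv.swap c d ∈ F :=
  h _ (Equiv.swap_apply_of_ne_of_ne hca.symm hda.symm)
    (Equiv.swap_apply_of_ne_of_ne hcb.symm hdb.symm)

open Classical in
lemma spp_trans {X : Type u} {F : Subgroup (Equiv.Perm X)} {x y z : X}
    (h1 : Equiv.swap x y ∈ F) (h2 : Equiv.swap y z ∈ F) (hxy : x ≠ y) (hxz : x ≠ z) :
    Equiv.swap x z ∈ F := by
  refine spp_conj h2 ?_
  rw [Equiv.swap_apply_of_ne_of_ne hxy hxz, Equiv.swap_apply_right]
  exact h1

open Classical in
/-- `a` is linked to the complement. -/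
def SppLink {X : Type u} (a b : X) (F : Subgroup (Equiv.Perm X)) : Prop :=
  ∀ c, c ≠ a → c ≠ b → Equiv.swap a c ∈ F

open Classical in
lemma spp_link_of {X : Type u} {a b : X} {F : Subgroup (Equiv.Perm X)} (h : SppLe a b F)
    {c : X} (hca : c ≠ a) (hcb : c ≠ b) (hc : Equiv.swap a c ∈ F) : SppLink a b F := by
  intro d hda hdb
  exact spp_trans hc (spp_swap_mem h hca hcb hda hdb) hca.symm hda.symm

open Classical in
lemma spp_link_of_move {X : Type u} (hX : 5 ≤ Cardinal.mk X) {a b : X}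
    {F : Subgroup (Equiv.Perm X)} (h : SppLe a b F)
    {f : Equiv.Perm X} (hf : f ∈ F) (h1 : f a ≠ a) (h2 : f a ≠ b) : SppLink a b F := by
  obtain ⟨d, hda, hdb, hd1, hd2⟩ := spp_exists hX a b (f a) (f b)
  obtain ⟨e, rfl⟩ := f.surjective d
  refine spp_link_of h (c := e) (by rintro rfl; exact hd1 rfl) (by rintro rfl; exact hd2 rfl) ?_
  exact spp_conj hf (spp_swap_mem h h1 h2 hda hdb)

open Classical in
lemma spp_link_transfer {X : Type u} (hX : 5 ≤ Cardinal.mk X) {a b : X}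
    {F : Subgroup (Equiv.Perm X)} (h : SppLe a b F) (hl : SppLink a b F)
    {f : Equiv.Perm X} (hf : f ∈ F) (h1 : f b = a) : SppLink b a F := by
  obtain ⟨d, hda, hdb, hd1, -⟩ := spp_exists hX a b (f a) (f b)
  obtain ⟨e, rfl⟩ := f.surjective d
  refine spp_link_of h.symm (c := e) (by rintro rfl; exact hda h1)
    (by rintro rfl; exact hd1 rfl) ?_
  refine spp_conj hf ?_
  rw [h1]
  exact hl _ hda hdb

open Classical in
/-- If `a` is linked, then `F` contains the stabilizer of `b`. -/
lemma spp_stab_mem {X : Type u} {a b : X} (hab : a ≠ b)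
    {F : Subgroup (Equiv.Perm X)} (h : SppLe a b F) (hl : SppLink a b F)
    (f : Equiv.Perm X) (hb : f b = b) : f ∈ F := by
  by_cases ha : f a = a
  · exact h f ha hb
  have hfb : f a ≠ b := fun e => hab (f.injective (e.trans hb.symm))
  have := hl _ ha hfb
  refine (F.mul_mem_cancel_left this).1 (h _ ?_ ?_)
  · simp
  · rw [Equiv.Perm.mul_apply, hb, Equiv.swap_apply_of_ne_of_ne hab.symm hfb.symm]

open Classical in
lemma spp_eq_stab {X : Type u} (hX : 5 ≤ Cardinal.mk X) {a b : X} (hab : a ≠ b)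
    {F : Subgroup (Equiv.Perm X)} (h : SppLe a b F) (hl : SppLink a b F)
    (hn : ¬ SppLink b a F) : F = MulAction.stabilizer (Equiv.Perm X) b := by
  ext f
  rw [MulAction.mem_stabilizer_iff, Equiv.Perm.smul_def]
  refine ⟨fun hf => ?_, spp_stab_mem hab h hl f⟩
  by_contra hb
  by_cases ha : f b = a
  · exact hn (spp_link_transfer hX h hl hf ha)
  · exact hn (spp_link_of_move hX h.symm hf hb ha)

open Classical in
lemma spp_eq_top {X : Type u} (hX : 5 ≤ Cardinal.mk X) {a b : X} (hab : a ≠ b)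
    {F : Subgroup (Equiv.Perm X)} (h : SppLe a b F) (hl : SppLink a b F)
    (hl' : SppLink b a F) : F = ⊤ := by
  rw [eq_top_iff]
  rintro f -
  by_cases hb : f b = b
  · exact spp_stab_mem hab h hl f hb
  have hs : Equiv.swap b (f b) ∈ F := by
    by_cases ha : f b = a
    · rw [ha]
      obtain ⟨c, hca, hcb, -⟩ := spp_exists hX a b a b
      have h1 := hl' c hcb hca
      have h2 := hl c hca hcb
      rw [Equiv.swap_comm] at h2
      exact spp_trans h1 h2 hcb.symm hab.symm
    · exact hl' _ hb ha
  refine (F.mul_mem_cancel_left hs).1 (spp_stab_mem hab h hl _ ?_)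
  simp

lemma spp_mem_set {X : Type u} {a b : X} (hab : a ≠ b) (f : Equiv.Perm X) :
    f ∈ MulAction.stabilizer (Equiv.Perm X) ({a, b} : Set X) ↔
      (f a = a ∧ f b = b) ∨ (f a = b ∧ f b = a) := by
  rw [MulAction.mem_stabilizer_iff, ← Set.image_smul, Set.image_pair, Set.pair_eq_pair_iff]
  simp only [Equiv.Perm.smul_def]

open Classical in
lemma spp_main {X : Type u} (hX : 5 ≤ Cardinal.mk X) {a b : X} (hab : a ≠ b)
    {F : Subgroup (Equiv.Perm X)} (h : SppLe a b F) :
    (F = MulAction.stabilizer (Equiv.Perm X) a ⊓ MulAction.stabilizer (Equiv.Perm X) b ∨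
         F = MulAction.stabilizer (Equiv.Perm X) ({a, b} : Set X) ∨
         F = MulAction.stabilizer (Equiv.Perm X) a ∨
         F = MulAction.stabilizer (Equiv.Perm X) b ∨
         F = (⊤ : Subgroup (Equiv.Perm X))) := by
  by_cases hl : SppLink a b F <;> by_cases hl' : SppLink b a F
  · exact .inr (.inr (.inr (.inr (spp_eq_top hX hab h hl hl'))))
  · exact .inr (.inr (.inr (.inl (spp_eq_stab hX hab h hl hl'))))
  · exact .inr (.inr (.inl (spp_eq_stab hX hab.symm h.symm hl' hl)))
  have key : ∀ f ∈ F, (f a = a ∧ f b = b) ∨ (f a = b ∧ f b = a) := by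
    intro f hf
    have h1 : f a = a ∨ f a = b := by
      by_contra hh
      rw [not_or] at hh
      exact hl (spp_link_of_move hX h hf hh.1 hh.2)
    have h2 : f b = b ∨ f b = a := by
      by_contra hh
      rw [not_or] at hh
      exact hl' (spp_link_of_move hX h.symm hf hh.1 hh.2)
    have h3 : f a ≠ f b := f.injective.ne hab
    grind
  by_cases hs : ∃ g ∈ F, g a = b ∧ g b = a
  · right; left
    obtain ⟨g, hg, hga, hgb⟩ := hs
    ext f
    rw [spp_mem_set hab]
    refine ⟨key f, ?_⟩
    rintro (⟨h1, h2⟩ | ⟨h1, h2⟩)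
    · exact h f h1 h2
    · refine (F.mul_mem_cancel_left hg).1 (h _ ?_ ?_)
      · rw [Equiv.Perm.mul_apply, h1, hgb]
      · rw [Equiv.Perm.mul_apply, h2, hga]
  · left
    ext f
    rw [Subgroup.mem_inf, MulAction.mem_stabilizer_iff, MulAction.mem_stabilizer_iff,
      Equiv.Perm.smul_def, Equiv.Perm.smul_def]
    refine ⟨fun hf => ?_, fun hf => h f hf.1 hf.2⟩
    rcases key f hf with h1 | h1
    · exact h1
    · exact absurd ⟨f, hf, h1⟩ hs

/-- if `X` has at least five elements, `a ≠ b` in `X`, and `H` is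
the pointwise stabilizer of `{a,b}` in `Sym X`, then the subgroups between `H`
and `Sym X` are exactly: `H`, the setwise stabilizer of `{a,b}`, the
stabilizers of `a` and of `b`, and `Sym X`; moreover these five are pairwise
distinct. -/
theorem subgroups_containing_pointwise_stabilizer_pair
    (X : Type u) (hX : 5 ≤ Cardinal.mk X) (a b : X) (hab : a ≠ b) :
    (List.Pairwise (· ≠ ·)
      [MulAction.stabilizer (Equiv.Perm X) a ⊓ MulAction.stabilizer (Equiv.Perm X) b,
        MulAction.stabilizer (Equiv.Perm X) ({a, b} : Set X),
        MulAction.stabilizer (Equiv.Perm X) a,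
        MulAction.stabilizer (Equiv.Perm X) b,
        (⊤ : Subgroup (Equiv.Perm X))]) ∧
    ∀ F : Subgroup (Equiv.Perm X),
      (MulAction.stabilizer (Equiv.Perm X) a ⊓ MulAction.stabilizer (Equiv.Perm X) b ≤ F ↔
        (F = MulAction.stabilizer (Equiv.Perm X) a ⊓ MulAction.stabilizer (Equiv.Perm X) b ∨
         F = MulAction.stabilizer (Equiv.Perm X) ({a, b} : Set X) ∨
         F = MulAction.stabilizer (Equiv.Perm X) a ∨
         F = MulAction.stabilizer (Equiv.Perm X) b ∨
         F = (⊤ : Subgroup (Equiv.Perm X)))) := by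
  classical
  constructor
  · obtain ⟨c, hca, hcb, -⟩ := spp_exists hX a b a b
    have sab : ∀ K : Subgroup (Equiv.Perm X), ∀ L : Subgroup (Equiv.Perm X), K = L →
      ∀ f, f ∈ K ↔ f ∈ L := by rintro K _ rfl f; rfl
    have e1 : Equiv.swap b c a = a := Equiv.swap_apply_of_ne_of_ne hab hca.symm
    have e2 : Equiv.swap a c b = b := Equiv.swap_apply_of_ne_of_ne hab.symm hcb.symm
    simp only [List.pairwise_cons, List.mem_cons, List.not_mem_nil, or_false, forall_eq_or_imp,
      forall_eq, List.Pairwise.nil, and_true, false_imp_iff, implies_true]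
    refine ⟨⟨?_, ?_, ?_, ?_⟩, ⟨?_, ?_, ?_⟩, ⟨?_, ?_⟩, ?_⟩ <;> intro h <;>
      have h1 := sab _ _ h (Equiv.swap a b) <;>
      have h2 := sab _ _ h (Equiv.swap a c) <;>
      have h3 := sab _ _ h (Equiv.swap b c) <;>
      simp only [Subgroup.mem_inf, spp_mem_set hab, MulAction.mem_stabilizer_iff,
        Equiv.Perm.smul_def, e1, e2, Equiv.swap_apply_left, Equiv.swap_apply_right,
        Subgroup.mem_top] at h1 h2 h3 <;>
      clear h e1 e2 sab <;> grind
  · intro F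
    constructor
    · intro h
      exact spp_main hX hab (fun f ha hb => h ⟨ha, hb⟩)
    · rintro (rfl | rfl | rfl | rfl | rfl)
      · exact le_rfl
      · intro f hf
        rw [spp_mem_set hab]
        exact .inl ⟨hf.1, hf.2⟩
      · exact inf_le_left
      · exact inf_le_right
      · exact le_top
end

section
/- Let T be a division ring and R = M(m,T) the full matrix ring over T, where R is not isomorphic to any of the fields F_2, F_3, F_4, F_5, nor to M(2,F_2). Let n ≥ 2, let L be the lattice of right R-submodules of R^n, G = Aut(L), and H = G(L_0). Then L(H) = L_0; that is, a right R-submodule x of R^n satisfies g(x) = x for every lattice automorphism g of L fixing every element of L_0 if and only if x = ⊕_{i∈S} e_i for some subset S of {1,…,n}. -/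
open MulOpposite

variable {R : Type*} [Ring R] {n : ℕ}

/-- The lattice of right `R`-submodules of `R^n` (as left `Rᵐᵒᵖ`-modules). -/
abbrev RLat (R : Type*) [Ring R] (n : ℕ) := Submodule Rᵐᵒᵖ (Fin n → R)

/-- `e i = ē_i · R`, the submodule spanned by the `i`-th standard basis vector. -/
def stdCoord (R : Type*) [Ring R] (n : ℕ) (i : Fin n) : RLat R n :=
  Submodule.span Rᵐᵒᵖ {Pi.single i (1 : R)}

/-- `L₀`, the sublattice of `L` generated by `e_1, …, e_n`: it consists of the
submodules `⊕_{i ∈ S} e_i` for `S ⊆ {1, …, n}`. -/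
def stdSublattice (R : Type*) [Ring R] (n : ℕ) : Set (RLat R n) :=
  Set.range fun S : Set (Fin n) => ⨆ i ∈ S, stdCoord R n i

/-- The pointwise stabilizer `G(M)` of a set `M ⊆ L` in the group of all
lattice automorphisms of `L`. -/
def fixing {L : Type*} [Lattice L] (M : Set L) : Subgroup (L ≃o L) where
  carrier := {g | ∀ m ∈ M, g m = m}
  one_mem' := fun m _ => rfl
  mul_mem' := fun {g h} hg hh m hm => by
    show g (h m) = m
    rw [hh m hm, hg m hm]
  inv_mem' := fun {g} hg m hm => by
    show g.symm m = m
    conv_lhs => rw [← hg m hm]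
    exact g.symm_apply_apply m


/-- Diagonal left multiplication by units, as a right-linear automorphism. -/
def diagEquiv {R : Type*} [Ring R] {n : ℕ} (d : Fin n → Rˣ) :
    (Fin n → R) ≃ₗ[Rᵐᵒᵖ] (Fin n → R) where
  toFun v := fun i => (d i : R) * v i
  invFun v := fun i => ((d i)⁻¹ : Rˣ) * v i
  map_add' v w := by funext i; simp [mul_add]
  map_smul' c v := by funext i; simp [mul_assoc]
  left_inv v := by funext i; simp
  right_inv v := by funext i; simp

theorem diagEquiv_mem {R : Type*} [Ring R] {n : ℕ} (d : Fin n → Rˣ) :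
    Submodule.orderIsoMapComap (diagEquiv d) ∈ fixing (stdSublattice R n) := by
  rintro _ ⟨S, rfl⟩
  have key : ∀ i, Submodule.map (diagEquiv d : (Fin n → R) →ₗ[Rᵐᵒᵖ] (Fin n → R))
      (stdCoord R n i) = stdCoord R n i := by
    intro i
    have h1 : (diagEquiv d) (Pi.single i (1 : R)) = Pi.single i (d i : R) := by
      funext j
      by_cases h : j = i
      · subst h; simp [diagEquiv]
      · simp [diagEquiv, h]
    have h2 : (Pi.single i (d i : R) : Fin n → R) = op (d i : R) • Pi.single i (1 : R) := by
      rw [← Pi.single_smul]; simp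
    have h3 : (Pi.single i (1 : R) : Fin n → R) =
        op (((d i)⁻¹ : Rˣ) : R) • Pi.single i (d i : R) := by
      rw [← Pi.single_smul]; simp
    unfold stdCoord
    rw [Submodule.map_span, Set.image_singleton]
    apply le_antisymm
    · rw [Submodule.span_singleton_le_iff_mem]
      show (diagEquiv d) (Pi.single i (1 : R)) ∈ _
      rw [h1, h2]
      exact Submodule.smul_mem _ _ (Submodule.mem_span_singleton_self _)
    · rw [Submodule.span_singleton_le_iff_mem]
      show _ ∈ Submodule.span Rᵐᵒᵖ {(diagEquiv d) (Pi.single i (1 : R))}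
      rw [h1]
      exact Submodule.mem_span_singleton.2 ⟨_, h3.symm⟩
  show Submodule.map (diagEquiv d : (Fin n → R) →ₗ[Rᵐᵒᵖ] (Fin n → R)) _ = _
  simp only [Submodule.map_iSup, key]

/-- Matrices `a` acting on the `k`-th coordinate send `l` into itself. -/
def Pres {R : Type*} [Ring R] {n : ℕ} (l : RLat R n) (k : Fin n) (a : R) : Prop :=
  ∀ v ∈ l, (Pi.single k (a * v k) : Fin n → R) ∈ l

theorem Pres.add {R : Type*} [Ring R] {n : ℕ} {l : RLat R n} {k : Fin n} {a b : R}
    (ha : Pres l k a) (hb : Pres l k b) : Pres l k (a + b) := by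
  intro v hv
  rw [add_mul, Pi.single_add]
  exact l.add_mem (ha v hv) (hb v hv)

theorem Pres.mul {R : Type*} [Ring R] {n : ℕ} {l : RLat R n} {k : Fin n} {a b : R}
    (ha : Pres l k a) (hb : Pres l k b) : Pres l k (a * b) := by
  intro v hv
  simpa [mul_assoc] using ha _ (hb v hv)

theorem Pres.sum {R : Type*} [Ring R] {n : ℕ} {l : RLat R n} {k : Fin n} {ι : Type*}
    (s : Finset ι) (a : ι → R) (ha : ∀ i, Pres l k (a i)) : Pres l k (∑ i ∈ s, a i) := by
  intro v hv
  have : (Pi.single k ((∑ i ∈ s, a i) * v k) : Fin n → R) =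
      ∑ i ∈ s, Pi.single k (a i * v k) := by
    rw [Finset.sum_mul]
    exact map_sum (AddMonoidHom.single (fun _ : Fin n => R) k) _ _
  rw [this]
  exact l.sum_mem fun i _ => ha i v hv

theorem pres_unit {R : Type*} [Ring R] {n : ℕ} {l : RLat R n} (k : Fin n)
    (hl : ∀ f ∈ fixing (stdSublattice R n), f l = l) (u : Rˣ) : Pres l k ((u : R) - 1) := by
  intro v hv
  have h := hl _ (diagEquiv_mem (Function.update 1 k u))
  have hm : diagEquiv (Function.update (1 : Fin n → Rˣ) k u) v ∈ l := by
    rw [← h]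
    exact Submodule.mem_map_of_mem hv
  have he : (Pi.single k (((u : R) - 1) * v k) : Fin n → R) =
      diagEquiv (Function.update (1 : Fin n → Rˣ) k u) v - v := by
    funext j
    by_cases h : j = k
    · subst h; simp [diagEquiv, sub_mul]
    · simp [diagEquiv, h]
  rw [he]
  exact l.sub_mem hm hv

theorem pres_sq_zero {R : Type*} [Ring R] {n : ℕ} {l : RLat R n} (k : Fin n)
    (hl : ∀ f ∈ fixing (stdSublattice R n), f l = l) (a : R) (ha : a * a = 0) :
    Pres l k a := by
  have := pres_unit k hl ⟨1 + a, 1 - a, by noncomm_ring; simp [ha], by noncomm_ring; simp [ha]⟩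
  simpa using this

theorem pres_one {R : Type*} [Ring R] {n : ℕ} {l : RLat R n} (k : Fin n)
    (hl : ∀ f ∈ fixing (stdSublattice R n), f l = l) (u w : Rˣ) (h : (w : R) * (u - 1) = 1) :
    Pres l k 1 := by
  have h1 := ((pres_unit k hl w).mul (pres_unit k hl u)).add (pres_unit k hl u)
  have : ((w : R) - 1) * (u - 1) + (u - 1) = 1 := by
    rw [sub_mul, h, one_mul, sub_add_cancel]
  rwa [this] at h1

theorem ringEquiv_zmod_two (R : Type) [Ring R] [Nontrivial R] (h : ∀ r : R, r = 0 ∨ r = 1) :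
    Nonempty (R ≃+* ZMod 2) := by
  classical
  have hu : (Finset.univ : Finset (Fin 2)).card = 2 := rfl
  let F : Fintype R := ⟨{0, 1}, fun r => by rcases h r with h | h <;> simp [h]⟩
  have hc : Fintype.card R = 2 := by
    show ({0, 1} : Finset R).card = 2
    simp
  exact ⟨(ZMod.ringEquivOfPrime R Nat.prime_two hc).symm⟩

theorem pres_single {T : Type} [DivisionRing T] {m n : ℕ}
    (h2 : ¬Nonempty (Matrix (Fin m) (Fin m) T ≃+* ZMod 2))
    {l : RLat (Matrix (Fin m) (Fin m) T) n} (k : Fin n)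
    (hl : ∀ f ∈ fixing (stdSublattice (Matrix (Fin m) (Fin m) T) n), f l = l)
    (i j : Fin m) : Pres l k (Matrix.single i j (1 : T)) := by
  have hne : ∀ i j : Fin m, i ≠ j → Pres l k (Matrix.single i j (1 : T)) := fun i j hij =>
    pres_sq_zero k hl _ (by simp [hij.symm])
  by_cases hij : i = j
  · subst hij
    by_cases hm : ∃ j, i ≠ j
    · obtain ⟨j, hj⟩ := hm
      have := (hne i j hj).mul (hne j i hj.symm)
      simpa using this
    · push Not at hm
      have huniv : (Finset.univ : Finset (Fin m)) = {i} := by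
        ext j; simp [(hm j).symm]
      let E : Matrix (Fin m) (Fin m) T ≃+* T :=
        { toFun := fun M => M i i
          invFun := fun t => Matrix.of fun _ _ => t
          left_inv := fun M => by
            ext a b
            have ha := hm a
            have hb := hm b
            subst ha
            subst hb
            rfl
          right_inv := fun t => rfl
          map_mul' := fun M N => by simp [Matrix.mul_apply, huniv]
          map_add' := fun M N => rfl }
      have hT : ∃ t : T, t ≠ 0 ∧ t ≠ 1 := by
        by_contra hcon
        push Not at hcon
        obtain ⟨e⟩ := ringEquiv_zmod_two T (fun r => by
          by_cases hr : r = 0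
          · exact Or.inl hr
          · exact Or.inr (hcon r hr))
        exact h2 ⟨E.trans e⟩
      obtain ⟨t, ht0, ht1⟩ := hT
      have h1 : (Matrix.single i i (1 : T)) = 1 := by
        ext a b
        have ha := hm a
        have hb := hm b
        subst ha
        subst hb
        simp
      rw [h1]
      refine pres_one k hl (Units.map E.symm.toRingHom.toMonoidHom (Units.mk0 t ht0))
        (Units.map E.symm.toRingHom.toMonoidHom (Units.mk0 (t - 1) (sub_ne_zero.2 ht1))⁻¹) ?_
      apply E.injective
      simp [sub_ne_zero.2 ht1]
  · exact hne i j hij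

/-- for `R = M(m,T)` (`T` a division ring) not isomorphic to
`F₂, F₃, F₄, F₅, M(2,F₂)`, and `L` the lattice of right submodules of `Rⁿ`
(`n ≥ 2`), `G = Aut L` and `H = G(L₀)`, we have `L(H) = L₀`. -/
theorem fixedLattice_of_fixing_stdSublattice_eq
    (T : Type) [DivisionRing T] (m : ℕ) (hm : 1 ≤ m) (n : ℕ) (hn : 2 ≤ n)
    (h2 : ¬Nonempty (Matrix (Fin m) (Fin m) T ≃+* ZMod 2))
    (h3 : ¬Nonempty (Matrix (Fin m) (Fin m) T ≃+* ZMod 3))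
    (h4 : ¬Nonempty (Matrix (Fin m) (Fin m) T ≃+* GaloisField 2 2))
    (h5 : ¬Nonempty (Matrix (Fin m) (Fin m) T ≃+* ZMod 5))
    (hM : ¬Nonempty (Matrix (Fin m) (Fin m) T ≃+* Matrix (Fin 2) (Fin 2) (ZMod 2))) :
    {l : RLat (Matrix (Fin m) (Fin m) T) n |
        ∀ f ∈ fixing (stdSublattice (Matrix (Fin m) (Fin m) T) n), f l = l} =
      stdSublattice (Matrix (Fin m) (Fin m) T) n := by
  apply Set.eq_of_subset_of_subset
  · intro l hl
    have hE := fun k => pres_single h2 k hl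
    have h1 : ∀ k, Pres l k 1 := by
      intro k
      have := Pres.sum Finset.univ _ (fun i => hE k i i)
      rwa [Matrix.sum_single_one] at this
    have hk : ∀ k, ∀ v ∈ l, v k ≠ 0 →
        (Pi.single k 1 : Fin n → Matrix (Fin m) (Fin m) T) ∈ l := by
      intro k v hv hvk
      obtain ⟨i, j, hij⟩ : ∃ i j, v k i j ≠ 0 := by
        by_contra hcon
        push Not at hcon
        exact hvk (by ext i j; exact hcon i j)
      rw [← Matrix.sum_single_one]
      have hs : (Pi.single k (∑ a, Matrix.single a a (1 : T)) :
          Fin n → Matrix (Fin m) (Fin m) T) = ∑ a, Pi.single k (Matrix.single a a (1 : T)) :=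
        map_sum (AddMonoidHom.single (fun _ : Fin n => Matrix (Fin m) (Fin m) T) k) _ _
      rw [hs]
      refine l.sum_mem fun a _ => ?_
      have h := hE k a i _ (l.smul_mem (op (Matrix.single j a (v k i j)⁻¹)) hv)
      have e : Matrix.single a i (1 : T) * (op (Matrix.single j a (v k i j)⁻¹) • v) k =
          Matrix.single a a (1 : T) := by
        rw [Pi.smul_apply, op_smul_eq_mul, ← mul_assoc, Matrix.single_mul_mul_single]
        simp [hij]
      rwa [e] at h
    refine ⟨{k | (Pi.single k 1 : Fin n → Matrix (Fin m) (Fin m) T) ∈ l}, ?_⟩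
    apply le_antisymm
    · refine iSup₂_le fun k hk => ?_
      exact (Submodule.span_singleton_le_iff_mem _ _).2 hk
    · intro v hv
      rw [← Finset.univ_sum_single v]
      refine Submodule.sum_mem _ fun k _ => ?_
      by_cases hvk : v k = 0
      · rw [hvk, Pi.single_zero]; exact Submodule.zero_mem _
      · have hmem := hk k v hv hvk
        refine Submodule.mem_iSup_of_mem k (Submodule.mem_iSup_of_mem hmem ?_)
        have : (Pi.single k (v k) : Fin n → Matrix (Fin m) (Fin m) T) =
            op (v k) • Pi.single k 1 := by
          rw [← Pi.single_smul]; simp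
        rw [this]
        exact Submodule.smul_mem _ _ (Submodule.mem_span_singleton_self _)
  · intro l hl f hf
    exact hf l hl
end
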